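/- arXiv:cs/0411032 — 4 statements merged into one kernel-verified Lean document; each statement's English description precedes it below -/
import Mathlib

section
/- Let F=(S,𝒦) be an adversarial frame, let i be an agent, and let f be an information function for agent i. Assume the set Φ₀ of primitive propositions is nonempty. Then agent i maintains f-secrecy in F if and only if, for every interpretation π, every formula φ of epistemic logic that is f-local and nontrivial in the epistemic structure M=(S,𝒦,π) satisfies M ⊨ ¬Kφ. -/
/-- Formulas of epistemic logic over a set `P` of primitive propositions. -/
inductive Formula (P : Type) : Type
  | prim : P → Formula P
  | neg : Formula P → Formula P
  | conj : Formula P → Formula P → Formula P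
  | know : Formula P → Formula P

/-- Satisfaction in an epistemic structure `(W, K, π)`. -/
def Sat {P W : Type} (K : W → W → Prop) (π : W → Set P) : W → Formula P → Prop
  | w, .prim p => p ∈ π w
  | w, .neg φ => ¬ Sat K π w φ
  | w, .conj φ ψ => Sat K π w φ ∧ Sat K π w ψ
  | w, .know φ => ∀ w', K w w' → Sat K π w' φ

/-- Theorem (Halpern–O'Neill): in an adversarial frame `(S, K)` (where `adv`
gives the adversary's local state, so `K` contains the local-state-identity
relation), with `f` an information function for agent `i` (whose local state is
given by `loc`), and assuming `P` (the set Φ₀ of primitive propositions) is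
nonempty: agent `i` maintains `f`-secrecy iff for every interpretation `π`,
every formula `φ` that is `f`-local and nontrivial in `M = (S, K, π)` satisfies
`M ⊨ ¬Kφ`. -/
theorem f_secrecy_iff_no_knowledge
    {P : Type} [Nonempty P] {S Ladv Li V : Type}
    (adv : S → Ladv) (loc : S → Li)
    (K : S → S → Prop)
    (hK : ∀ s s' : S, adv s = adv s' → K s s')
    (f : S → V)
    (hf : ∀ s s' : S, loc s = loc s' → f s = f s') :
    (∀ s : S, ∀ v : V, (∃ t : S, f t = v) → ∃ s' : S, K s s' ∧ f s' = v) ↔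
    (∀ π : S → Set P, ∀ φ : Formula P,
      ((∀ s s' : S, f s = f s' → (Sat K π s φ ↔ Sat K π s' φ)) ∧
        (∃ s s' : S, Sat K π s φ ∧ Sat K π s' (.neg φ))) →
      ∀ s : S, Sat K π s (.neg (.know φ))) := by
  constructor
  · rintro h π φ ⟨hloc, _, b, _, hb⟩ s hs
    obtain ⟨s', hk, he⟩ := h s (f b) ⟨b, rfl⟩
    exact hb ((hloc s' b he).1 (hs s' hk))
  · rintro h s v ⟨t, rfl⟩
    by_contra hn
    have hn' : ∀ s', K s s' → f s' ≠ f t := fun s' hk he => hn ⟨s', hk, he⟩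
    obtain ⟨p⟩ := ‹Nonempty P›
    refine h (fun x => {_q | f x ≠ f t}) (.prim p) ⟨?_, s, t, ?_, ?_⟩ s ?_
    · intro a b hab
      simp [Sat, hab]
    · simpa [Sat] using hn' s (hK s s rfl)
    · simp [Sat]
    · intro s' hk
      simpa [Sat] using hn' s' hk
end

section
/- Let P be a message-transmission protocol with set of global states S_P, exchanged-message function msg : S_P → 𝓜, and adversary local states consisting of sets of symbolic messages, and assume that for every m∈𝓜 there is at least one state s∈S_P with msg(s)=m. Assume the set Φ₀ of primitive propositions is nonempty. Then P preserves message secrecy (i.e., for all s∈S_P and all m∈𝓜, 𝒦ᵈʸ(s)∩G(m)≠∅) if and only if, for every interpretation π, every formula φ of epistemic logic that depends only on the message exchanged and is nontrivial in M=(S_P,𝒦ᵈʸ,π) satisfies M ⊨ ¬Kφ. -/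
/-- Symbolic messages over plaintexts `Pl` and keys `Key`. -/
inductive Msg (Pl Key : Type) : Type
  | plain : Pl → Msg Pl Key
  | key : Key → Msg Pl Key
  | pair : Msg Pl Key → Msg Pl Key → Msg Pl Key
  | enc : Msg Pl Key → Key → Msg Pl Key

/-- Dolev–Yao derivability `H ⊢ m`, given the inverse-key map `inv`. -/
inductive DY {Pl Key : Type} (inv : Key → Key) (H : Set (Msg Pl Key)) :
    Msg Pl Key → Prop
  | mem {m : Msg Pl Key} : m ∈ H → DY inv H m
  | dec {m : Msg Pl Key} {k : Key} :
      DY inv H (.enc m k) → DY inv H (.key (inv k)) → DY inv H m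
  | fst {m₁ m₂ : Msg Pl Key} : DY inv H (.pair m₁ m₂) → DY inv H m₁
  | snd {m₁ m₂ : Msg Pl Key} : DY inv H (.pair m₁ m₂) → DY inv H m₂

/-- Extended messages: messages possibly containing the symbol `▢`. -/
inductive EMsg (Pl Key : Type) : Type
  | plain : Pl → EMsg Pl Key
  | key : Key → EMsg Pl Key
  | pair : EMsg Pl Key → EMsg Pl Key → EMsg Pl Key
  | enc : EMsg Pl Key → Key → EMsg Pl Key
  | box : EMsg Pl Key

open Classical in
/-- `⌊m⌋_K`: replace every indecipherable submessage of `m` by `▢`. -/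
noncomputable def floorK {Pl Key : Type} (inv : Key → Key) (K : Set Key) :
    Msg Pl Key → EMsg Pl Key
  | .plain p => .plain p
  | .key k => .key k
  | .pair m₁ m₂ => .pair (floorK inv K m₁) (floorK inv K m₂)
  | .enc m k => if inv k ∈ K then .enc (floorK inv K m) k else .box

/-- `Keys(H) = {k : H ⊢ k}`. -/
def KeysOf {Pl Key : Type} (inv : Key → Key) (H : Set (Msg Pl Key)) : Set Key :=
  {k | DY inv H (.key k)}

/-- Theorem: a message-transmission protocol `P` (states `S`, adversary local
states `sadv` being sets of messages, exchanged message `msg s ∈ 𝓜`, with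
every `m ∈ 𝓜` exchanged in some state) preserves message secrecy iff, for every
interpretation `π`, every formula `φ` that depends only on the message
exchanged and is nontrivial in `M = (S, 𝒦ᵈʸ, π)` satisfies `M ⊨ ¬Kφ`.
Here `𝒦ᵈʸ` relates `s, s'` iff `⌊s_adv⌋_{Keys(s_adv)} = ⌊s'_adv⌋_{Keys(s'_adv)}`,
and `P` (the set Φ₀ of primitive propositions) is nonempty. -/
theorem message_secrecy_iff_no_knowledge
    {P : Type} [Nonempty P] {Pl Key S : Type}
    (inv : Key → Key) (hinv : Function.Involutive inv)
    (sadv : S → Set (Msg Pl Key))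
    (𝓜 : Set (Msg Pl Key)) (msg : S → Msg Pl Key)
    (hmsg : ∀ s : S, msg s ∈ 𝓜)
    (hsurj : ∀ m ∈ 𝓜, ∃ s : S, msg s = m)
    (Kdy : S → S → Prop)
    (hKdy : ∀ s s' : S, Kdy s s' ↔
      floorK inv (KeysOf inv (sadv s)) '' sadv s =
        floorK inv (KeysOf inv (sadv s')) '' sadv s') :
    (∀ s : S, ∀ m ∈ 𝓜, ∃ s' : S, Kdy s s' ∧ msg s' = m) ↔
    (∀ π : S → Set P, ∀ φ : Formula P,
      ((∀ s s' : S, msg s = msg s' → (Sat Kdy π s φ ↔ Sat Kdy π s' φ)) ∧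
        (∃ s s' : S, Sat Kdy π s φ ∧ Sat Kdy π s' (.neg φ))) →
      ∀ s : S, Sat Kdy π s (.neg (.know φ))) := by
  constructor
  · rintro h π φ ⟨hdep, -, t, -, ht⟩ s hk
    obtain ⟨s', hs', hm⟩ := h s (msg t) (hmsg t)
    exact ht ((hdep s' t hm).1 (hk s' hs'))
  · intro h s m hm
    by_contra hne
    obtain ⟨t, ht⟩ := hsurj m hm
    obtain ⟨p⟩ := ‹Nonempty P›
    have key : ∀ s', Kdy s s' → msg s' ≠ m := fun s' h1 h2 => hne ⟨s', h1, h2⟩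
    refine h (fun s' => {_q | msg s' ≠ m}) (.prim p) ⟨?_, s, t, ?_, ?_⟩ s ?_
    · intro a b hab
      change msg a ≠ m ↔ msg b ≠ m
      rw [hab]
    · exact key s ((hKdy s s).2 rfl)
    · exact fun hc => hc ht
    · exact fun s' h1 => key s' h1
end

section
/- Let S be a set of global states in which the adversary's local state is a pair (x,z) with x a message component and z an auxiliary component, and assume S is rich in the sense that for every message component x occurring in some state of S and every auxiliary component z occurring in some state of S, there is a state in S whose adversary local state is (x,z). Let 𝒦 be a binary relation on S such that (s,s')∈𝒦 whenever the auxiliary components of s_adv and s'_adv are equal. Then for every interpretation π, every formula φ of epistemic logic such that (i) the truth value of φ at a state depends only on the message component of the adversary's local state (if two states have equal message components, φ has the same truth value at both) and (ii) φ is nontrivial in M=(S,𝒦,π), we have M ⊨ ¬Kφ. (This is the epistemic content of the theorem that a semantically secure encryption scheme yields M ⊨ ¬Kφ in the adversarial structure (S_C,𝒦ᶜʳʸᵖᵗ,π) for every nontrivial formula φ depending only on messages, since semantic security makes 𝒦ᶜʳʸᵖᵗ relate any two states with the same auxiliary information.) -/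
/-- Theorem (epistemic content of semantic security): let `S` be a set of
global states whose adversary local state is a pair `(x, z)` of a message
component and an auxiliary component (given by `adv`), which is rich (for
every message component `x` occurring in some state and auxiliary component
`z` occurring in some state, some state has adversary local state `(x, z)`),
and let `K` relate any two states whose auxiliary components agree. Then for
every interpretation `π`, every formula `φ` whose truth depends only on the
message component and which is nontrivial in `M = (S, K, π)` satisfies
`M ⊨ ¬Kφ`. -/
theorem semantic_security_no_knowledge
    {P S X Z : Type}
    (adv : S → X × Z)
    (hrich : ∀ s t : S, ∃ u : S, adv u = ((adv s).1, (adv t).2))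
    (K : S → S → Prop)
    (hK : ∀ s s' : S, (adv s).2 = (adv s').2 → K s s') :
    ∀ π : S → Set P, ∀ φ : Formula P,
      (∀ s s' : S, (adv s).1 = (adv s').1 → (Sat K π s φ ↔ Sat K π s' φ)) →
      (∃ s s' : S, Sat K π s φ ∧ Sat K π s' (.neg φ)) →
      ∀ s : S, Sat K π s (.neg (.know φ)) := by
  intro π φ hmsg hnt s
  obtain ⟨_, t, _, ht⟩ := hnt
  simp only [Sat] at ht ⊢
  intro hk
  obtain ⟨u, hu⟩ := hrich t s
  exact ht ((hmsg u t (by rw [hu])).1 (hk u (hK s u (by rw [hu]))))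
end

section
/- Let K be a set of keys and m a symbolic message. Every submessage m' of ⌊m⌋_K that contains no occurrence of the symbol ▢ (and is hence an ordinary message) satisfies K∪{m} ⊢ m'. (This is the sound direction of the paper's claim that m' is a submessage of ⌊m⌋_K if and only if K∪{m} ⊢ m'.) -/
/-- The canonical embedding of ordinary messages into extended messages. -/
def Msg.toE {Pl Key : Type} : Msg Pl Key → EMsg Pl Key
  | .plain p => .plain p
  | .key k => .key k
  | .pair m₁ m₂ => .pair m₁.toE m₂.toE
  | .enc m k => .enc m.toE k

/-- The submessage relation on extended messages. -/
inductive IsSubmsg {Pl Key : Type} : EMsg Pl Key → EMsg Pl Key → Prop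
  | refl (m : EMsg Pl Key) : IsSubmsg m m
  | pairL {m' m₁ : EMsg Pl Key} (m₂ : EMsg Pl Key) : IsSubmsg m' m₁ → IsSubmsg m' (.pair m₁ m₂)
  | pairR (m₁ : EMsg Pl Key) {m' m₂ : EMsg Pl Key} : IsSubmsg m' m₂ → IsSubmsg m' (.pair m₁ m₂)
  | enc {m' m : EMsg Pl Key} (k : Key) : IsSubmsg m' m → IsSubmsg m' (.enc m k)

theorem toE_eq_floor {Pl Key : Type} (inv : Key → Key) (K : Set Key) (m : Msg Pl Key) :
    ∀ m' : Msg Pl Key, m'.toE = floorK inv K m → m' = m := by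
  induction m with
  | plain p => intro m' h; cases m' <;> simp_all [Msg.toE, floorK]
  | key k => intro m' h; cases m' <;> simp_all [Msg.toE, floorK]
  | pair a b iha ihb =>
    intro m' h
    cases m' <;> simp only [Msg.toE, floorK, EMsg.pair.injEq, reduceCtorEq] at h
    rw [iha _ h.1, ihb _ h.2]
  | enc a k ih =>
    intro m' h
    by_cases hk : inv k ∈ K
    · cases m' <;> simp only [Msg.toE, floorK, hk, if_true, EMsg.enc.injEq, reduceCtorEq] at h
      rw [ih _ h.1, h.2]
    · cases m' <;> simp [Msg.toE, floorK, hk] at h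

theorem floor_aux {Pl Key : Type} (inv : Key → Key) (K : Set Key) (H : Set (Msg Pl Key))
    (hK : ∀ k ∈ K, DY inv H (.key k)) (m' m : Msg Pl Key) (hm : DY inv H m)
    (hsub : IsSubmsg m'.toE (floorK inv K m)) : DY inv H m' := by
  induction m with
  | plain p =>
    generalize he : floorK inv K (Msg.plain p : Msg Pl Key) = e at hsub
    generalize hf : m'.toE = f at hsub
    cases hsub with
    | refl => rw [toE_eq_floor inv K _ m' (hf.trans he.symm)]; exact hm
    | _ => simp [floorK] at he
  | key p =>
    generalize he : floorK inv K (Msg.key p : Msg Pl Key) = e at hsub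
    generalize hf : m'.toE = f at hsub
    cases hsub with
    | refl => rw [toE_eq_floor inv K _ m' (hf.trans he.symm)]; exact hm
    | _ => simp [floorK] at he
  | pair a b iha ihb =>
    generalize he : floorK inv K (Msg.pair a b) = e at hsub
    generalize hf : m'.toE = f at hsub
    cases hsub with
    | refl => rw [toE_eq_floor inv K _ m' (hf.trans he.symm)]; exact hm
    | pairL _ h =>
      simp only [floorK, EMsg.pair.injEq] at he
      exact iha hm.fst (by rw [hf, he.1]; exact h)
    | pairR _ h =>
      simp only [floorK, EMsg.pair.injEq] at he
      exact ihb hm.snd (by rw [hf, he.2]; exact h)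
    | enc => simp [floorK] at he
  | enc a k ih =>
    generalize he : floorK inv K (Msg.enc a k) = e at hsub
    generalize hf : m'.toE = f at hsub
    by_cases hk : inv k ∈ K
    · cases hsub with
      | refl => rw [toE_eq_floor inv K _ m' (hf.trans he.symm)]; exact hm
      | enc _ h =>
        simp only [floorK, hk, if_true, EMsg.enc.injEq] at he
        exact ih (hm.dec (hK _ hk)) (by rw [hf, he.1]; exact h)
      | _ => simp [floorK, hk] at he
    · cases hsub with
      | refl => rw [toE_eq_floor inv K _ m' (hf.trans he.symm)]; exact hm
      | _ => simp [floorK, hk] at he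

/-- Every ▢-free (hence ordinary) submessage `m'` of `⌊m⌋_K` satisfies
`K ∪ {m} ⊢ m'` (keys in `K` being regarded as messages). -/
theorem sub_floor_derivable {Pl Key : Type}
    (inv : Key → Key) (hinv : Function.Involutive inv)
    (K : Set Key) (m m' : Msg Pl Key)
    (hsub : IsSubmsg m'.toE (floorK inv K m)) :
    DY inv (Msg.key '' K ∪ {m}) m' := by
  exact floor_aux inv K _ (fun k hk => .mem (Or.inl ⟨k, hk, rfl⟩)) m' m
    (.mem (Or.inr rfl)) hsub
end
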